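/- arXiv:2007.12111 — 2 statements merged into one kernel-verified Lean document; each statement's English description precedes it below -/
import Mathlib

section
/- Let k be a positive integer and let G be a connected (k,2)-expander which contains no Hamilton cycle. Then G has at least (k+1)²/2 boosters. -/
/-- The external neighbourhood of a vertex set `U`: vertices outside `U` having a
neighbour in `U`. -/
def extNbhd {V : Type*} (G : SimpleGraph V) (U : Set V) : Set V :=
  {u | u ∉ U ∧ ∃ v ∈ U, G.Adj u v}

/-- A graph is a `(k,α)`-expander if `|N(U)| ≥ α|U|` for every vertex set `U` with
`|U| ≤ k`. -/
def IsExpander {V : Type*} (G : SimpleGraph V) (k α : ℝ) : Prop :=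
  ∀ U : Set V, (U.ncard : ℝ) ≤ k → α * (U.ncard : ℝ) ≤ ((extNbhd G U).ncard : ℝ)

/-- A non-edge `e` of `G` is a booster if adding it creates a graph which is either
Hamiltonian or whose longest path is longer than that of `G`. -/
def IsBooster {V : Type*} [DecidableEq V] (G : SimpleGraph V) (e : Sym2 V) : Prop :=
  ¬e.IsDiag ∧ e ∉ G.edgeSet ∧
    ((∃ (a : V) (w : (G ⊔ SimpleGraph.fromEdgeSet {e}).Walk a a), w.IsHamiltonianCycle) ∨
      ∃ (u v : V) (w : (G ⊔ SimpleGraph.fromEdgeSet {e}).Walk u v), w.IsPath ∧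
        ∀ (a b : V) (w' : G.Walk a b), w'.IsPath → w'.length < w.length)

/-!
A longest path is turned around by Pósa rotations: if its first vertex is adjacent to a vertex `u`
of the path, reversing the segment before `u` gives another longest path with the same last vertex.
Let `R` be the set of all first vertices reachable in this way from a longest path `p`. Every
external neighbour of `R` is next to a vertex of `R` on the original path `p`, because rotations
only destroy path edges at elements of `R`. A vertex has at most two path neighbours, and the first
vertex of `p` only one, so `|N(R)| < 2|R|` and expansion forces `|R| ≥ k + 1`.

Joining the two ends of a longest path gives a cycle through its vertices; by connectedness this
cycle is Hamiltonian or can be opened up into a longer path. Hence in a non-Hamiltonian graph the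
ends of a longest path always form a booster. Rotating `p` yields `k + 1` possible ends, and fixing
each of these and rotating again yields `k + 1` boosters at each of them; every booster is counted
at most twice.
-/

section PosaRotations

variable {V : Type*} {G : SimpleGraph V} {p q : List V} {a u v x y : V}

section ConsecutiveEntries

theorem pair_infix_append_iff {s t : List V} :
    [a, u] <:+: s ++ t ↔
      [a, u] <:+: s ∨ [a, u] <:+: t ∨ s.getLast? = some a ∧ t.head? = some u := by
  induction s with
  | nil => simp
  | cons c s ih =>
    rw [List.cons_append, List.infix_cons_iff, List.infix_cons_iff, ih]
    cases s <;> cases t <;> grind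

theorem right_unique_pair_infix (hp : p.Nodup) (hu : [a, u] <:+: p) (hv : [a, v] <:+: p) :
    u = v := by
  obtain ⟨s, t, rfl⟩ := hu
  obtain ⟨s', t', h⟩ := hv
  have ha : a ∉ s ∧ a ∉ u :: t := by
    simp only [List.nodup_append, List.append_assoc, List.cons_append, List.nil_append,
      List.nodup_cons] at hp
    grind
  have hsplit : s ++ a :: (u :: t) = s' ++ a :: (v :: t') := by simpa using h.symm
  have htail := ((List.append_cons_inj_of_notMem ha.1 ha.2).1 hsplit).2.2
  exact (List.cons.inj htail).1

theorem left_unique_pair_infix (hp : p.Nodup) (hu : [u, a] <:+: p) (hv : [v, a] <:+: p) :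
    u = v :=
  right_unique_pair_infix (List.nodup_reverse.2 hp) (by simpa using List.reverse_infix.2 hu)
    (by simpa using List.reverse_infix.2 hv)

theorem not_pair_infix_of_head?_eq (hp : p.Nodup) (hx : p.head? = some x) : ¬[u, x] <:+: p := by
  rintro ⟨s, t, rfl⟩
  cases s <;> simp_all

/-- `a` and `u` are neighbouring entries of the list `p`, in either order: if `p` lists the vertices
of a path, then `au` is an edge of that path. -/
def IsConsecutive (p : List V) (a u : V) : Prop :=
  [a, u] <:+: p ∨ [u, a] <:+: p

theorem isConsecutive_append_iff {s t : List V} :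
    IsConsecutive (s ++ t) a u ↔ IsConsecutive s a u ∨ IsConsecutive t a u ∨
      s.getLast? = some a ∧ t.head? = some u ∨ s.getLast? = some u ∧ t.head? = some a := by
  simp only [IsConsecutive, pair_infix_append_iff]
  tauto

theorem isConsecutive_reverse_iff : IsConsecutive p.reverse a u ↔ IsConsecutive p a u := by
  simp only [IsConsecutive, ← List.reverse_infix (l₂ := p), List.reverse_cons, List.reverse_nil,
    List.nil_append, List.cons_append]
  exact or_comm

end ConsecutiveEntries

section Counting

theorem ncard_le_ncard_of_leftUnique {α β : Type*} {r : α → β → Prop} {s : Set α} {t : Set β}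
    (ht : t.Finite) (hr : Relator.LeftUnique r) (h : ∀ a ∈ s, ∃ b ∈ t, r a b) :
    s.ncard ≤ t.ncard := by
  rcases s.eq_empty_or_nonempty with rfl | ⟨a, ha⟩
  · simp
  have : Nonempty β := ⟨(h a ha).choose⟩
  choose! f hft hfr using h
  exact Set.ncard_le_ncard_of_injOn f hft
    (fun a ha b hb hab ↦ hr (hfr a ha) (hab ▸ hfr b hb)) ht

theorem ncard_lt_two_mul_ncard_of_isConsecutive {R N : Set V} (hp : p.Nodup) (hR : R.Finite)
    (hx : p.head? = some x) (hxR : x ∈ R) (h : ∀ u ∈ N, ∃ a ∈ R, IsConsecutive p a u) :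
    N.ncard < 2 * R.ncard := by
  have hcover : N ⊆ {u | ∃ a ∈ R, [a, u] <:+: p} ∪ {u | ∃ a ∈ R \ {x}, [u, a] <:+: p} := by
    intro u hu
    obtain ⟨a, ha, hau | hua⟩ := h u hu
    · exact Or.inl ⟨a, ha, hau⟩
    · exact Or.inr ⟨a, ⟨ha, by rintro rfl; exact not_pair_infix_of_head?_eq hp hx hua⟩, hua⟩
  have hsucc : {u | ∃ a ∈ R, [a, u] <:+: p}.ncard ≤ R.ncard :=
    ncard_le_ncard_of_leftUnique (r := fun u a ↦ [a, u] <:+: p) hR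
      (fun _ _ _ ↦ right_unique_pair_infix hp) fun _ h ↦ h
  have hpred : {u | ∃ a ∈ R \ {x}, [u, a] <:+: p}.ncard ≤ (R \ {x}).ncard :=
    ncard_le_ncard_of_leftUnique (r := fun u a ↦ [u, a] <:+: p) hR.sdiff
      (fun _ _ _ ↦ left_unique_pair_infix hp) fun _ h ↦ h
  have hfinite : ({u | ∃ a ∈ R, [a, u] <:+: p} ∪ {u | ∃ a ∈ R \ {x}, [u, a] <:+: p}).Finite := by
    refine (List.finite_toSet p).subset ?_
    rintro u (⟨a, -, hau⟩ | ⟨a, -, hua⟩)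
    · exact hau.subset (by simp)
    · exact hua.subset (by simp)
  have hdiff := Set.ncard_sdiff_singleton_lt_of_mem hxR hR
  calc N.ncard ≤ _ := Set.ncard_le_ncard hcover hfinite
    _ ≤ _ := Set.ncard_union_le _ _
    _ < 2 * R.ncard := by omega

theorem ncard_mul_le_two_mul_ncard_edgeSet [Finite V] (B : SimpleGraph V) {S : Set V} {d : ℕ}
    (hdeg : ∀ v ∈ S, d ≤ (B.neighborSet v).ncard) : S.ncard * d ≤ 2 * B.edgeSet.ncard := by
  classical
  have := Fintype.ofFinite V
  have hdegree (v : V) : (B.neighborSet v).ncard = B.degree v := by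
    rw [Set.ncard_eq_toFinset_card', Set.toFinset_card, B.card_neighborSet_eq_degree]
  calc S.ncard * d = ∑ _ ∈ S.toFinset, d := by simp [Set.ncard_eq_toFinset_card']
    _ ≤ ∑ v ∈ S.toFinset, B.degree v :=
      Finset.sum_le_sum fun v hv ↦ (hdeg v (Set.mem_toFinset.1 hv)).trans_eq (hdegree v)
    _ ≤ ∑ v, B.degree v := Finset.sum_le_univ_sum_of_nonneg fun _ ↦ Nat.zero_le _
    _ = 2 * B.edgeSet.ncard := by
      rw [B.sum_degrees_eq_twice_card_edges, Set.ncard_eq_toFinset_card']; rfl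

end Counting

section Paths

/-- `p` is the vertex sequence of a path of `G`. Lists are used instead of `SimpleGraph.Walk`
because rotations change the end vertices, which are part of the type of a walk. -/
structure IsVertexPath (G : SimpleGraph V) (p : List V) : Prop where
  ne_nil : p ≠ []
  nodup : p.Nodup
  isChain : p.IsChain G.Adj

/-- `p` is the vertex sequence of a path of maximum length of `G`. -/
structure IsLongestPath (G : SimpleGraph V) (p : List V) : Prop extends IsVertexPath G p where
  length_le : ∀ q, IsVertexPath G q → q.length ≤ p.length

namespace IsVertexPath

theorem of_isPath {w : G.Walk x y} (hw : w.IsPath) : IsVertexPath G w.support :=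
  ⟨w.support_ne_nil, hw.support_nodup, w.isChain_adj_support⟩

theorem exists_isPath (hp : IsVertexPath G p) :
    ∃ (x y : V) (w : G.Walk x y), w.IsPath ∧ w.support = p := by
  have hsupport := SimpleGraph.Walk.support_ofSupport hp.ne_nil hp.isChain
  exact ⟨_, _, .ofSupport p hp.ne_nil hp.isChain, .mk' (by rw [hsupport]; exact hp.nodup), hsupport⟩

theorem mono {H : SimpleGraph V} (hGH : G ≤ H) (hp : IsVertexPath G p) : IsVertexPath H p :=
  ⟨hp.ne_nil, hp.nodup, hp.isChain.imp fun _ _ h ↦ hGH h⟩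

theorem reverse (hp : IsVertexPath G p) : IsVertexPath G p.reverse :=
  ⟨by simpa using hp.ne_nil, List.nodup_reverse.2 hp.nodup,
    List.isChain_reverse.2 (hp.isChain.imp fun _ _ h ↦ h.symm)⟩

theorem cons (hp : IsVertexPath G p) (hx : p.head? = some x) (hu : u ∉ p) (hux : G.Adj u x) :
    IsVertexPath G (u :: p) :=
  ⟨List.cons_ne_nil _ _, List.nodup_cons.2 ⟨hu, hp.nodup⟩,
    hp.isChain.cons fun y hy ↦ by simp_all⟩

theorem append_comm {s t : List V} (hp : IsVertexPath G (s ++ t))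
    (hclosed : ∀ y ∈ t.getLast?, ∀ x ∈ s.head?, G.Adj y x) : IsVertexPath G (t ++ s) where
  ne_nil := by simpa [and_comm] using hp.ne_nil
  nodup := List.nodup_append_comm.1 hp.nodup
  isChain := hp.isChain.right_of_append.append hp.isChain.left_of_append hclosed

theorem head?_ne_getLast? (hp : IsVertexPath G p) (hlen : 2 ≤ p.length) (hx : p.head? = some x)
    (hy : p.getLast? = some y) : x ≠ y := by
  rintro rfl
  obtain ⟨l, rfl⟩ := List.head?_eq_some_iff.1 hx
  have hl : l ≠ [] := by rintro rfl; simp at hlen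
  rw [List.getLast?_cons_of_ne_nil hl] at hy
  exact (List.nodup_cons.1 hp.nodup).1 (List.mem_of_getLast? hy)

theorem exists_isHamiltonianCycle [DecidableEq V] (hp : IsVertexPath G p) (hlen : 3 ≤ p.length)
    (hx : p.head? = some x) (hy : p.getLast? = some y) (hyx : G.Adj y x) (hall : ∀ v, v ∈ p) :
    ∃ (a : V) (w : G.Walk a a), w.IsHamiltonianCycle := by
  obtain ⟨x', y', w, hw, rfl⟩ := hp.exists_isPath
  obtain rfl : x' = x := by
    simpa [List.head?_eq_some_head w.support_ne_nil] using hx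
  obtain rfl : y' = y := by
    simpa [List.getLast?_eq_some_getLast w.support_ne_nil] using hy
  have hwlen : w.length ≠ 1 := by rw [w.length_support] at hlen; omega
  have hcycle : (w.cons hyx).IsCycle := (w.cons_isCycle_iff hyx).2
    ⟨hw, fun he ↦ hwlen (hw.length_eq_one_of_mem_edges (Sym2.eq_swap ▸ he))⟩
  have htail : ∀ a, (w.cons hyx).support.tail.count a = 1 :=
    hw.isHamiltonian_of_mem hall
  exact ⟨_, w.cons hyx,
    SimpleGraph.Walk.isHamiltonianCycle_iff_isCycle_and_support_count_tail_eq_one.2 ⟨hcycle, htail⟩⟩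

-- The edge leaving `p` starts at some `v`; open the cycle formed by `p` and `yx` at `v`.
theorem exists_length_lt (hG : G.Connected) (hp : IsVertexPath G p) (hx : p.head? = some x)
    (hy : p.getLast? = some y) (hyx : G.Adj y x) (hu : u ∉ p) :
    ∃ q, IsVertexPath G q ∧ p.length < q.length := by
  obtain ⟨w⟩ := hG.preconnected x u
  obtain ⟨⟨⟨v, z⟩, hvz⟩, -, hv, hz⟩ :=
    w.exists_boundary_dart {v | v ∈ p} (List.mem_of_mem_head? hx) hu
  obtain ⟨s, t, rfl⟩ := List.append_of_mem hv
  have hrot : IsVertexPath G (v :: t ++ s) := hp.append_comm <| by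
    intro y' hy' x' hx'
    simp_all
  refine ⟨z :: (v :: t ++ s), hrot.cons rfl (fun h ↦ hz ?_) hvz.symm, by grind⟩
  simp only [List.mem_append, Set.mem_ofPred_eq] at h ⊢
  exact h.symm

theorem exists_isHamiltonianCycle_or_length_lt [DecidableEq V] (hG : G.Connected)
    (hp : IsVertexPath G p) (hlen : 3 ≤ p.length) (hx : p.head? = some x)
    (hy : p.getLast? = some y) (hyx : G.Adj y x) :
    (∃ (a : V) (w : G.Walk a a), w.IsHamiltonianCycle) ∨
      ∃ q, IsVertexPath G q ∧ p.length < q.length := by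
  by_cases hall : ∀ v, v ∈ p
  · exact Or.inl (hp.exists_isHamiltonianCycle hlen hx hy hyx hall)
  · obtain ⟨u, hu⟩ := not_forall.1 hall
    exact Or.inr (hp.exists_length_lt hG hx hy hyx hu)

end IsVertexPath

theorem exists_isLongestPath [Nonempty V] (G : SimpleGraph V) [Finite G.edgeSet] :
    ∃ p, IsLongestPath G p := by
  obtain ⟨x, y, w, hw, hmax⟩ := SimpleGraph.Walk.exists_isPath_forall_isPath_length_le_length G
  refine ⟨w.support, .of_isPath hw, fun q hq ↦ ?_⟩
  obtain ⟨_, _, w', hw', rfl⟩ := hq.exists_isPath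
  simpa using hmax _ _ w' hw'

namespace IsLongestPath

theorem reverse (hp : IsLongestPath G p) : IsLongestPath G p.reverse :=
  ⟨hp.toIsVertexPath.reverse, by simpa using hp.length_le⟩

theorem mem_of_adj_head? (hp : IsLongestPath G p) (hx : p.head? = some x) (hux : G.Adj u x) :
    u ∈ p := by
  by_contra hu
  simpa using hp.length_le _ (hp.toIsVertexPath.cons hx hu hux)

theorem isBooster [DecidableEq V] (hG : G.Connected)
    (hham : ¬∃ (a : V) (w : G.Walk a a), w.IsHamiltonianCycle) (hp : IsLongestPath G p)
    (hlen : 3 ≤ p.length) (hx : p.head? = some x) (hy : p.getLast? = some y) :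
    IsBooster G s(y, x) := by
  have hne : y ≠ x := (hp.head?_ne_getLast? (by omega) hx hy).symm
  have hle : G ≤ G ⊔ SimpleGraph.fromEdgeSet {s(y, x)} := le_sup_left
  refine ⟨by simpa using hne, fun hyx ↦ ?_, ?_⟩
  · obtain hcycle | ⟨q, hq, hlt⟩ :=
      hp.exists_isHamiltonianCycle_or_length_lt hG hlen hx hy hyx
    · exact hham hcycle
    · exact (hp.length_le q hq).not_gt hlt
  · refine ((hp.mono hle).exists_isHamiltonianCycle_or_length_lt (hG.mono hle) hlen hx hy
      (by simp [hne])).imp_right ?_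
    rintro ⟨q, hq, hlt⟩
    obtain ⟨_, _, w, hw, rfl⟩ := hq.exists_isPath
    refine ⟨_, _, w, hw, fun a b w' hw' ↦ ?_⟩
    have hle' := hp.length_le _ (.of_isPath hw')
    simp only [SimpleGraph.Walk.length_support] at hlt hle'
    omega

end IsLongestPath

end Paths

section Rotations

/-- A Pósa rotation with fixed last vertex: the first vertex `x` of the path is adjacent to the
later vertex `u`, and the segment before `u` is reversed. -/
inductive IsRotation (G : SimpleGraph V) : List V → List V → Prop
  | reverse_segment {x u : V} (s t : List V) (hxu : G.Adj x u) :
    IsRotation G (x :: s ++ u :: t) ((x :: s).reverse ++ u :: t)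

/-- The first vertices of the lists obtained from `p` by sequences of Pósa rotations, which all have
the same last vertex as `p`. -/
def rotationEnds (G : SimpleGraph V) (p : List V) : Set V :=
  {x | ∃ q, Relation.ReflTransGen (IsRotation G) p q ∧ q.head? = some x}

namespace IsRotation

theorem perm (h : IsRotation G p q) : q.Perm p := by
  obtain ⟨s, t, -⟩ := h
  exact (List.reverse_perm _).append_right _

theorem getLast?_eq (h : IsRotation G p q) : q.getLast? = p.getLast? := by
  obtain ⟨s, t, -⟩ := h
  simp [List.getLast?_append, List.getLast?_cons]

theorem isVertexPath (h : IsRotation G p q) (hp : IsVertexPath G p) : IsVertexPath G q where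
  ne_nil hq := hp.ne_nil (hq ▸ h.perm).nil_eq.symm
  nodup := h.perm.nodup_iff.2 hp.nodup
  isChain := by
    have hchain := hp.isChain
    obtain ⟨s, t, hxu⟩ := h
    refine .append (List.isChain_reverse.2 ?_) hchain.right_of_append (by simpa using hxu)
    exact hchain.left_of_append.imp fun _ _ h ↦ h.symm

-- With `p = x ⋯ w u ⋯`, the rotation replaces the path edge `wu` by `xu`, and `w` is the head of
-- `q`.
theorem isConsecutive_iff (h : IsRotation G p q) (hvp : p.head? ≠ some v) (hvq : q.head? ≠ some v)
    (hv : ∀ w, q.head? = some w → ¬IsConsecutive p w v) :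
    IsConsecutive q a v ↔ IsConsecutive p a v := by
  obtain @⟨x, u, s, t, -⟩ := h
  set w := s.getLast?.getD x with hw
  have hlast : (x :: s).getLast? = some w := List.getLast?_cons
  have hhead : ((x :: s).reverse ++ u :: t).head? = some w := by simp [hw]
  have hwu : IsConsecutive (x :: s ++ u :: t) w u :=
    isConsecutive_append_iff.2 <| .inr <| .inr <| .inl ⟨hlast, rfl⟩
  have hxv : x ≠ v := by simpa using hvp
  have hwv : w ≠ v := by simpa [hhead] using hvq
  have huv : u ≠ v := by rintro rfl; exact hv w hhead hwu
  rw [isConsecutive_append_iff, isConsecutive_append_iff, isConsecutive_reverse_iff,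
    List.getLast?_reverse, hlast]
  simp [hxv, hwv, huv]

end IsRotation

theorem perm_of_reflTransGen_isRotation (h : Relation.ReflTransGen (IsRotation G) p q) :
    q.Perm p := by
  induction h with
  | refl => rfl
  | tail _ hrot ih => exact hrot.perm.trans ih

theorem getLast?_eq_of_reflTransGen_isRotation (h : Relation.ReflTransGen (IsRotation G) p q) :
    q.getLast? = p.getLast? := by
  induction h with
  | refl => rfl
  | tail _ hrot ih => exact hrot.getLast?_eq.trans ih

theorem mem_rotationEnds_self (hx : p.head? = some x) : x ∈ rotationEnds G p :=
  ⟨p, .refl, hx⟩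

theorem finite_rotationEnds : (rotationEnds G p).Finite := by
  refine (List.finite_toSet p).subset ?_
  rintro x ⟨q, hq, hx⟩
  exact (perm_of_reflTransGen_isRotation hq).subset (List.mem_of_mem_head? hx)

theorem isConsecutive_iff_of_reflTransGen_isRotation
    (h : Relation.ReflTransGen (IsRotation G) p q) (hu : u ∉ rotationEnds G p)
    (hfar : ∀ a ∈ rotationEnds G p, ¬IsConsecutive p a u) :
    IsConsecutive q a u ↔ IsConsecutive p a u := by
  induction h generalizing a with
  | refl => rfl
  | tail hreach hrot ih =>
    refine (hrot.isConsecutive_iff (fun h ↦ hu ⟨_, hreach, h⟩)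
      (fun h ↦ hu ⟨_, hreach.tail hrot, h⟩) fun w hw ↦ ?_).trans ih
    exact ih.not.2 (hfar w ⟨_, hreach.tail hrot, hw⟩)

namespace IsLongestPath

theorem of_reflTransGen_isRotation (hp : IsLongestPath G p)
    (h : Relation.ReflTransGen (IsRotation G) p q) : IsLongestPath G q where
  toIsVertexPath := by
    induction h with
    | refl => exact hp.toIsVertexPath
    | tail _ hrot ih => exact hrot.isVertexPath ih
  length_le r hr := (hp.length_le r hr).trans_eq (perm_of_reflTransGen_isRotation h).length_eq.symm

theorem exists_isRotation_of_adj_head? (hp : IsLongestPath G p) (hx : p.head? = some x)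
    (hux : G.Adj u x) : ∃ q w, IsRotation G p q ∧ q.head? = some w ∧ IsConsecutive p w u := by
  obtain ⟨s, t, rfl⟩ := List.append_of_mem (hp.mem_of_adj_head? hx hux)
  obtain - | ⟨x', s⟩ := s
  · exact absurd (by simpa using hx) hux.ne
  · obtain rfl : x' = x := by simpa using hx
    exact ⟨_, s.getLast?.getD x', .reverse_segment s t hux.symm, by simp,
      isConsecutive_append_iff.2 <| .inr <| .inr <| .inl ⟨List.getLast?_cons, rfl⟩⟩

theorem exists_isConsecutive_of_mem_extNbhd (hp : IsLongestPath G p)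
    (hu : u ∈ extNbhd G (rotationEnds G p)) : ∃ a ∈ rotationEnds G p, IsConsecutive p a u := by
  obtain ⟨hu, x, ⟨q, hq, hx⟩, hux⟩ := hu
  by_contra! hfar
  obtain ⟨q', w, hrot, hw, hwu⟩ :=
    (hp.of_reflTransGen_isRotation hq).exists_isRotation_of_adj_head? hx hux
  exact hfar w ⟨q', hq.tail hrot, hw⟩
    ((isConsecutive_iff_of_reflTransGen_isRotation hq hu hfar).1 hwu)

theorem ncard_extNbhd_rotationEnds_lt (hp : IsLongestPath G p) :
    (extNbhd G (rotationEnds G p)).ncard < 2 * (rotationEnds G p).ncard :=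
  have hhead := List.head?_eq_some_head hp.ne_nil
  ncard_lt_two_mul_ncard_of_isConsecutive hp.nodup finite_rotationEnds hhead
    (mem_rotationEnds_self hhead) fun _ ↦ hp.exists_isConsecutive_of_mem_extNbhd

end IsLongestPath

end Rotations

section Expanders

theorem IsExpander.lt_ncard_rotationEnds {k : ℝ} (hexp : IsExpander G k 2)
    (hp : IsLongestPath G p) : k < (rotationEnds G p).ncard := by
  by_contra! hle
  have hlt : ((extNbhd G (rotationEnds G p)).ncard : ℝ) < 2 * (rotationEnds G p).ncard := by
    exact_mod_cast hp.ncard_extNbhd_rotationEnds_lt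
  exact (hexp _ hle).not_gt hlt

theorem IsExpander.three_le_length {k : ℝ} (hk : 1 ≤ k) (hexp : IsExpander G k 2)
    (hp : IsLongestPath G p) : 3 ≤ p.length := by
  classical
  obtain ⟨x, l, rfl⟩ := List.exists_cons_of_ne_nil hp.ne_nil
  have hsub : extNbhd G {x} ⊆ l.toFinset := by
    rintro u ⟨hu, _, rfl, hux⟩
    simpa using (List.mem_cons.1 (hp.mem_of_adj_head? rfl hux)).resolve_left hu
  have hcard : (extNbhd G {x}).ncard ≤ l.length :=
    (Set.ncard_le_ncard hsub (Finset.finite_toSet _)).trans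
      ((Set.ncard_coe_finset _).trans_le l.toFinset_card_le)
  have hexpand : 2 ≤ (extNbhd G {x}).ncard := by
    have h := hexp {x} (by simpa using hk)
    rw [Set.ncard_singleton, Nat.cast_one, mul_one] at h
    exact_mod_cast h
  rw [List.length_cons]
  omega

/-- The graph whose edges are the boosters of `G`; its degree sum counts every booster twice. -/
def boosterGraph [DecidableEq V] (G : SimpleGraph V) : SimpleGraph V :=
  .fromEdgeSet {e | IsBooster G e}

theorem edgeSet_boosterGraph [DecidableEq V] (G : SimpleGraph V) :
    (boosterGraph G).edgeSet = {e | IsBooster G e} := by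
  rw [boosterGraph, SimpleGraph.edgeSet_fromEdgeSet]
  exact sdiff_eq_left.2 (Set.disjoint_left.2 fun e he ↦ he.1)

theorem rotationEnds_subset_neighborSet_boosterGraph [DecidableEq V] (hG : G.Connected)
    (hham : ¬∃ (a : V) (w : G.Walk a a), w.IsHamiltonianCycle) (hp : IsLongestPath G p)
    (hlen : 3 ≤ p.length) (hy : p.getLast? = some y) :
    rotationEnds G p ⊆ (boosterGraph G).neighborSet y := by
  rintro x ⟨q, hq, hx⟩
  have hbooster : IsBooster G s(y, x) :=
    (hp.of_reflTransGen_isRotation hq).isBooster hG hham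
      (by rwa [(perm_of_reflTransGen_isRotation hq).length_eq]) hx
      ((getLast?_eq_of_reflTransGen_isRotation hq).trans hy)
  rwa [SimpleGraph.mem_neighborSet, ← SimpleGraph.mem_edgeSet, edgeSet_boosterGraph]

end Expanders

end PosaRotations

/-- **Lemma (expanders have many boosters).** A connected `(k,2)`-expander with no
Hamilton cycle has at least `(k+1)²/2` boosters. -/
theorem expander_many_boosters
    {V : Type*} [Fintype V] [DecidableEq V] (G : SimpleGraph V) (k : ℕ) (hk : 1 ≤ k)
    (hconn : G.Connected) (hexp : IsExpander G (k : ℝ) 2)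
    (hham : ¬∃ (a : V) (w : G.Walk a a), w.IsHamiltonianCycle) :
    ((k + 1 : ℝ) ^ 2 / 2) ≤ ({e : Sym2 V | IsBooster G e}.ncard : ℝ) := by
  have := hconn.nonempty
  obtain ⟨p, hp⟩ := exists_isLongestPath G
  have hends : ∀ q, IsLongestPath G q → k + 1 ≤ (rotationEnds G q).ncard := fun q hq ↦ by
    exact_mod_cast hexp.lt_ncard_rotationEnds hq
  have hdeg : ∀ y ∈ rotationEnds G p, k + 1 ≤ ((boosterGraph G).neighborSet y).ncard := by
    rintro y ⟨q, hq, hy⟩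
    have hq' := (hp.of_reflTransGen_isRotation hq).reverse
    have hlen := hexp.three_le_length (by exact_mod_cast hk) hq'
    exact (hends _ hq').trans (Set.ncard_le_ncard
      (rotationEnds_subset_neighborSet_boosterGraph hconn hham hq' hlen (by simpa using hy)))
  have hcount : (k + 1) * (k + 1) ≤ 2 * {e : Sym2 V | IsBooster G e}.ncard :=
    calc (k + 1) * (k + 1) ≤ (rotationEnds G p).ncard * (k + 1) :=
          Nat.mul_le_mul_right _ (hends p hp)
      _ ≤ 2 * (boosterGraph G).edgeSet.ncard := ncard_mul_le_two_mul_ncard_edgeSet _ hdeg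
      _ = 2 * {e : Sym2 V | IsBooster G e}.ncard := by rw [edgeSet_boosterGraph]
  rw [div_le_iff₀ two_pos, sq, mul_comm _ (2 : ℝ)]
  exact_mod_cast hcount
end

section
/- Let m, d ≥ 1 be integers and let H be a graph on h ≥ 4m vertices satisfying: (1) every vertex of H has degree at least 2; (2) no vertex v of H with degree less than d is contained in a cycle of length 3 or 4, and any two distinct vertices of H each of degree less than d are at graph distance at least 5 from each other; (3) every set U ⊆ V(H) with |U| ≤ 5m spans at most d|U|/10 edges of H; (4) for every pair of disjoint sets U_1, U_2 ⊆ V(H) with |U_1| = |U_2| = m there is an edge of H between U_1 and U_2. Then H is an (h/4, 2)-expander, i.e. every set U ⊆ V(H) with |U| ≤ h/4 satisfies |N_H(U)| ≥ 2|U|. -/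
/-!
Split a set `U` with `|U| ≤ m` into its vertices `S` of degree less than `d` and the rest `T`.
Vertices of `S` are so far apart that their neighbourhoods are disjoint, so `|N(S)| ≥ 2|S|`, and
every vertex outside `S` has at most one neighbour in `S ∪ N(S)`. Hence each vertex of `T` sends
at least `d - 1` edges into `T ∪ B`, where `B = N(T) \ (S ∪ N(S))`; if `|B| < 3|T|` this is too
many edges for a set of fewer than `4|T|` vertices, because `d ≥ 5` (two adjacent vertices span an
edge, so `1 ≤ 2d / 10`) and hence `(d - 1) / 2 ≥ 4d / 10`. Therefore
`|N(U)| ≥ |N(S)| - |T| + |B| ≥ 2|S| + 2|T| = 2|U|`.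
If `|U| > m`, fewer than `m` vertices lie outside `U ∪ N(U)`, as they have no edge to `U`, which
leaves more than `h - |U| - m ≥ h / 2 ≥ 2|U|` vertices for `N(U)`.
-/

open Finset

section Neighbourhoods

variable {V : Type*} [DecidableEq V] (G : SimpleGraph V) [G.LocallyFinite]

/-- The external neighbourhood `extNbhd G U` of a finite set `U` of vertices in a locally finite
graph, as a `Finset`. -/
def extNbhdFinset (U : Finset V) : Finset V :=
  U.biUnion (fun v => G.neighborFinset v) \ U

variable {G}

lemma mem_extNbhdFinset {U : Finset V} {x : V} :
    x ∈ extNbhdFinset G U ↔ x ∉ U ∧ ∃ v ∈ U, G.Adj x v := by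
  simp [extNbhdFinset, G.adj_comm x, and_comm]

variable (G)

lemma coe_extNbhdFinset (U : Finset V) : (extNbhdFinset G U : Set V) = extNbhd G U :=
  Set.ext fun _ => mem_extNbhdFinset

lemma card_extNbhdFinset_add_card_sdiff_le (S T : Finset V) :
    #(extNbhdFinset G S) + #(extNbhdFinset G T \ (S ∪ extNbhdFinset G S)) ≤
      #(extNbhdFinset G (S ∪ T)) + #T := by
  have hdisj : Disjoint (extNbhdFinset G S) (extNbhdFinset G T \ (S ∪ extNbhdFinset G S)) :=
    disjoint_sdiff.mono_left subset_union_right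
  rw [← card_union_of_disjoint hdisj]
  refine (card_le_card fun x hx => ?_).trans (card_union_le _ _)
  simp only [mem_union, mem_sdiff, mem_extNbhdFinset] at hx ⊢
  grind

end Neighbourhoods

section Scattered

variable {V : Type*} {G : SimpleGraph V} {S : Set V}

/-- A set of vertices is scattered if its elements are pairwise at distance at least five and lie
on no cycle of length three or four. A cycle through `s` is represented by a closed walk based
at `s`. -/
structure IsScattered (G : SimpleGraph V) (S : Set V) : Prop where
  five_le_length : ∀ s ∈ S, ∀ t ∈ S, s ≠ t → ∀ w : G.Walk s t, 5 ≤ w.length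
  five_le_length_of_isCycle : ∀ s ∈ S, ∀ w : G.Walk s s, w.IsCycle → 5 ≤ w.length

namespace IsScattered

lemma mono {S' : Set V} (hS : IsScattered G S) (h : S' ⊆ S) : IsScattered G S' where
  five_le_length s hs t ht := hS.five_le_length s (h hs) t (h ht)
  five_le_length_of_isCycle s hs := hS.five_le_length_of_isCycle s (h hs)

lemma eq_of_length_lt (hS : IsScattered G S) {s t : V} (hs : s ∈ S) (ht : t ∈ S)
    (w : G.Walk s t) (hw : w.length < 5) : s = t := by
  by_contra hst
  exact (hS.five_le_length s hs t ht hst w).not_gt hw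

lemma not_adj (hS : IsScattered G S) {s t : V} (hs : s ∈ S) (ht : t ∈ S) : ¬G.Adj s t :=
  fun hst => hst.ne (hS.eq_of_length_lt hs ht hst.toWalk (by simp))

lemma not_adj_of_adj_of_adj (hS : IsScattered G S) {s a b : V} (hs : s ∈ S)
    (hsa : G.Adj s a) (hsb : G.Adj s b) : ¬G.Adj a b := by
  intro hab
  have hcycle : (SimpleGraph.Walk.cons hsa (.cons hab (.cons hsb.symm .nil))).IsCycle := by
    simp [SimpleGraph.Walk.cons_isCycle_iff, SimpleGraph.Walk.cons_isPath_iff, hsa.ne, hsa.ne',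
      hsb.ne, hsb.ne', hab.ne]
  simpa using hS.five_le_length_of_isCycle s hs _ hcycle

lemma eq_of_common_neighbors (hS : IsScattered G S) {s v a b : V} (hs : s ∈ S) (hab : a ≠ b)
    (hsa : G.Adj s a) (hsb : G.Adj s b) (hva : G.Adj v a) (hvb : G.Adj v b) : v = s := by
  by_contra hvs
  have hcycle :
      (SimpleGraph.Walk.cons hsa (.cons hva.symm (.cons hvb (.cons hsb.symm .nil)))).IsCycle := by
    simp [SimpleGraph.Walk.cons_isCycle_iff, SimpleGraph.Walk.cons_isPath_iff, hsa.ne, hsa.ne',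
      hsb.ne', hva.ne', hvb.ne, hab, hvs, Ne.symm hvs]
  simpa using hS.five_le_length_of_isCycle s hs _ hcycle

lemma subsingleton_neighborSet_inter (hS : IsScattered G S) {v : V} (hv : v ∉ S) :
    (G.neighborSet v ∩ (S ∪ extNbhd G S)).Subsingleton := by
  rintro x ⟨hvx : G.Adj v x, hx⟩ y ⟨hvy : G.Adj v y, hy⟩
  by_contra hxy
  rcases hx with hx | ⟨-, s, hs, hxs⟩ <;> rcases hy with hy | ⟨-, t, ht, hyt⟩
  · exact hxy (hS.eq_of_length_lt hx hy (.cons hvx.symm (.cons hvy .nil)) (by simp))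
  · obtain rfl : x = t :=
      hS.eq_of_length_lt hx ht (.cons hvx.symm (.cons hvy (.cons hyt .nil))) (by simp)
    exact hS.not_adj_of_adj_of_adj hx hvx.symm hyt.symm hvy
  · obtain rfl : y = s :=
      hS.eq_of_length_lt hy hs (.cons hvy.symm (.cons hvx (.cons hxs .nil))) (by simp)
    exact hS.not_adj_of_adj_of_adj hy hvy.symm hxs.symm hvx
  · obtain rfl : s = t :=
      hS.eq_of_length_lt hs ht
        (.cons hxs.symm (.cons hvx.symm (.cons hvy (.cons hyt .nil)))) (by simp)
    exact hv (hS.eq_of_common_neighbors hs hxy hxs.symm hyt.symm hvx hvy ▸ hs)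

lemma mul_card_le_card_extNbhdFinset [DecidableEq V] [G.LocallyFinite] {S : Finset V} {k : ℕ}
    (hS : IsScattered G (S : Set V)) (hk : ∀ v ∈ S, k ≤ G.degree v) :
    k * #S ≤ #(extNbhdFinset G S) := by
  have hdisjoint : (S : Set V).PairwiseDisjoint fun v => G.neighborFinset v := by
    intro s hs t ht hst
    refine disjoint_left.2 fun x hsx htx => hst ?_
    rw [SimpleGraph.mem_neighborFinset] at hsx htx
    exact hS.eq_of_length_lt hs ht (.cons hsx (.cons htx.symm .nil)) (by simp)
  have houtside : Disjoint (S.biUnion fun v => G.neighborFinset v) S := by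
    refine disjoint_left.2 fun x hx hxS => ?_
    obtain ⟨s, hs, hsx⟩ := mem_biUnion.1 hx
    exact hS.not_adj hs hxS ((G.mem_neighborFinset s x).1 hsx)
  calc k * #S ≤ ∑ v ∈ S, G.degree v := by
        rw [mul_comm, ← smul_eq_mul]; exact card_nsmul_le_sum _ _ _ hk
    _ = #(S.biUnion fun v => G.neighborFinset v) := (card_biUnion hdisjoint).symm
    _ = #(extNbhdFinset G S) := by rw [extNbhdFinset, sdiff_eq_self_of_disjoint houtside]

end IsScattered

end Scattered

section Sparse

variable {V : Type*} {G : SimpleGraph V} {n d : ℕ}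

lemma sum_card_filter_adj_eq_two_mul_ncard (G : SimpleGraph V) [DecidableRel G.Adj]
    (W : Finset V) :
    ∑ v ∈ W, #{w ∈ W | G.Adj v w} = 2 * {e ∈ G.edgeSet | ∀ v ∈ e, v ∈ W}.ncard := by
  classical
  let GW := G.induce (W : Set V)
  have hdegree (v : W) : GW.degree v = #{w ∈ W | G.Adj v w} := by
    rw [← GW.card_neighborFinset_eq_degree, ← card_map (Function.Embedding.subtype _)]
    congr 1
    ext w
    simp [GW, and_comm]
  have hedges : {e ∈ G.edgeSet | ∀ v ∈ e, v ∈ W} =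
      GW.edgeFinset.map (Function.Embedding.subtype _).sym2Map := by
    ext e
    simp only [coe_map, SimpleGraph.coe_edgeFinset]
    constructor
    · induction e with | _ a b
      rintro ⟨hab, hW⟩
      exact ⟨s(⟨a, hW a (Sym2.mem_mk_left a b)⟩, ⟨b, hW b (Sym2.mem_mk_right a b)⟩), hab, rfl⟩
    · rintro ⟨f, hf, rfl⟩
      induction f with | _ a b
      exact ⟨hf, by simp⟩
  rw [hedges, Set.ncard_coe_finset, card_map, ← GW.sum_degrees_eq_twice_card_edges,
    ← sum_coe_sort W]
  exact sum_congr rfl fun v _ => (hdegree v).symm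

lemma mul_card_le_two_mul_ncard [DecidableRel G.Adj] {T W : Finset V} {k : ℕ} (hTW : T ⊆ W)
    (hk : ∀ v ∈ T, k ≤ #{w ∈ W | G.Adj v w}) :
    k * #T ≤ 2 * {e ∈ G.edgeSet | ∀ v ∈ e, v ∈ W}.ncard :=
  calc k * #T ≤ ∑ v ∈ T, #{w ∈ W | G.Adj v w} := by
        rw [mul_comm, ← smul_eq_mul]; exact card_nsmul_le_sum _ _ _ hk
    _ ≤ ∑ v ∈ W, #{w ∈ W | G.Adj v w} := sum_le_sum_of_subset hTW
    _ = 2 * {e ∈ G.edgeSet | ∀ v ∈ e, v ∈ W}.ncard := sum_card_filter_adj_eq_two_mul_ncard G W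

lemma degree_le_card_filter_adj_add_one [DecidableEq V] [DecidableRel G.Adj] [G.LocallyFinite]
    {T X : Finset V} {v : V} (hv : v ∈ T) (hX : (G.neighborSet v ∩ X).Subsingleton) :
    G.degree v ≤ #{w ∈ T ∪ extNbhdFinset G T \ X | G.Adj v w} + 1 := by
  have hcover : G.neighborFinset v ⊆
      {w ∈ T ∪ extNbhdFinset G T \ X | G.Adj v w} ∪ {w ∈ X | G.Adj v w} := by
    intro x hx
    rw [SimpleGraph.mem_neighborFinset] at hx
    simp only [mem_union, mem_filter, mem_sdiff, mem_extNbhdFinset]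
    grind [G.adj_comm]
  have hone : #{w ∈ X | G.Adj v w} ≤ 1 := by
    refine card_le_one.2 fun x hx y hy => ?_
    rw [mem_filter] at hx hy
    exact hX ⟨hx.2, hx.1⟩ ⟨hy.2, hy.1⟩
  calc G.degree v = #(G.neighborFinset v) := (G.card_neighborFinset_eq_degree v).symm
    _ ≤ #{w ∈ T ∪ extNbhdFinset G T \ X | G.Adj v w} + #{w ∈ X | G.Adj v w} :=
      (card_le_card hcover).trans (card_union_le _ _)
    _ ≤ _ := Nat.add_le_add_left hone _

/-- Every set `W` of at most `n` vertices spans at most `d|W|/10` edges; the factor ten is on the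
left to stay within `ℕ`. -/
def IsLocallySparse (G : SimpleGraph V) (n d : ℕ) : Prop :=
  ∀ W : Finset V, #W ≤ n → 10 * {e ∈ G.edgeSet | ∀ v ∈ e, v ∈ W}.ncard ≤ d * #W

namespace IsLocallySparse

lemma five_le_of_adj (hG : IsLocallySparse G n d) (hn : 2 ≤ n) {u v : V} (huv : G.Adj u v) :
    5 ≤ d := by
  classical
  have hcard : #{u, v} = 2 := card_pair huv.ne
  have hspan : 0 < {e ∈ G.edgeSet | ∀ x ∈ e, x ∈ ({u, v} : Finset V)}.ncard := by
    refine (Set.ncard_pos ?_).2 ⟨s(u, v), huv, by simp⟩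
    exact ({u, v} : Finset V).sym2.finite_toSet.subset fun e he => mem_sym2_iff.2 he.2
  have hfew := hG {u, v} (hcard.trans_le hn)
  rw [hcard] at hfew
  omega

lemma three_mul_card_le_card_sdiff [DecidableEq V] [G.LocallyFinite] (hG : IsLocallySparse G n d)
    (hd : 0 < d) {T X : Finset V} (hT : 4 * #T ≤ n) (hdeg : ∀ v ∈ T, d ≤ G.degree v)
    (hX : ∀ v ∈ T, (G.neighborSet v ∩ X).Subsingleton) :
    3 * #T ≤ #(extNbhdFinset G T \ X) := by
  classical
  set B := extNbhdFinset G T \ X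
  by_contra! hB
  obtain ⟨v, hv⟩ : T.Nonempty := card_pos.1 (by omega)
  obtain ⟨u, hvu⟩ := (G.degree_pos_iff_exists_adj v).1 (hd.trans_le (hdeg v hv))
  have hfive : 5 ≤ d := hG.five_le_of_adj (by have := card_pos.2 ⟨v, hv⟩; omega) hvu
  have hinside : ∀ v ∈ T, d - 1 ≤ #{w ∈ T ∪ B | G.Adj v w} := fun v hv =>
    Nat.sub_le_of_le_add ((hdeg v hv).trans (degree_le_card_filter_adj_add_one hv (hX v hv)))
  have hunion : #(T ∪ B) < 4 * #T := (card_union_le T B).trans_lt (by omega)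
  have hmany := mul_card_le_two_mul_ncard subset_union_left hinside
  have hfew := hG (T ∪ B) (by omega)
  refine lt_irrefl (4 * d * #T) ?_
  calc 4 * d * #T ≤ 5 * (d - 1) * #T := Nat.mul_le_mul_right _ (by omega)
    _ = 5 * ((d - 1) * #T) := mul_assoc _ _ _
    _ ≤ 10 * {e ∈ G.edgeSet | ∀ v ∈ e, v ∈ T ∪ B}.ncard := by omega
    _ ≤ d * #(T ∪ B) := hfew
    _ < d * (4 * #T) := by gcongr
    _ = 4 * d * #T := by ring

end IsLocallySparse

end Sparse

lemma two_mul_card_le_card_extNbhdFinset_of_isScattered {V : Type*} [DecidableEq V]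
    {G : SimpleGraph V} [G.LocallyFinite] {n d : ℕ} {U : Finset V} (hd : 0 < d)
    (hmin : ∀ v ∈ U, 2 ≤ G.degree v) (hscattered : IsScattered G {v | G.degree v < d})
    (hsparse : IsLocallySparse G n d) (hU : 4 * #U ≤ n) : 2 * #U ≤ #(extNbhdFinset G U) := by
  set S := {v ∈ U | G.degree v < d}
  set T := {v ∈ U | ¬G.degree v < d}
  have hunion : S ∪ T = U := filter_union_filter_not_eq _ U
  have hcard : #S + #T = #U := card_filter_add_card_filter_not _
  have hSscattered : IsScattered G (S : Set V) :=
    hscattered.mono fun v hv => (mem_filter.1 hv).2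
  have hlow : 2 * #S ≤ #(extNbhdFinset G S) :=
    hSscattered.mul_card_le_card_extNbhdFinset fun v hv => hmin v (mem_filter.1 hv).1
  have hhigh : 3 * #T ≤ #(extNbhdFinset G T \ (S ∪ extNbhdFinset G S)) := by
    refine hsparse.three_mul_card_le_card_sdiff hd (by omega)
      (fun v hv => not_lt.1 (mem_filter.1 hv).2) fun v hv => ?_
    rw [coe_union, coe_extNbhdFinset]
    exact hSscattered.subsingleton_neighborSet_inter
      fun hvS => (mem_filter.1 hv).2 (mem_filter.1 hvS).2
  have hsplit := card_extNbhdFinset_add_card_sdiff_le G S T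
  rw [hunion] at hsplit
  omega

lemma card_lt_card_add_card_extNbhdFinset_add {V : Type*} [Fintype V] [DecidableEq V]
    {G : SimpleGraph V} [G.LocallyFinite] {m : ℕ}
    (hjoined : ∀ U₁ U₂ : Finset V, Disjoint U₁ U₂ → #U₁ = m → #U₂ = m →
      ∃ u ∈ U₁, ∃ v ∈ U₂, G.Adj u v)
    {U : Finset V} (hU : m ≤ #U) : Fintype.card V < #U + #(extNbhdFinset G U) + m := by
  have hrest : #(U ∪ extNbhdFinset G U)ᶜ < m := by
    by_contra! hm
    obtain ⟨A, hAU, hA⟩ := exists_subset_card_eq hU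
    obtain ⟨B, hBU, hB⟩ := exists_subset_card_eq hm
    have hdisj : Disjoint A B :=
      (disjoint_compl_right.mono_left subset_union_left).mono hAU hBU
    obtain ⟨a, ha, b, hb, hab⟩ := hjoined A B hdisj hA hB
    have hbU := hBU hb
    rw [mem_compl, mem_union, mem_extNbhdFinset, not_or] at hbU
    exact hbU.2 ⟨hbU.1, a, hAU ha, hab.symm⟩
  have := card_compl_add_card (U ∪ extNbhdFinset G U)
  have := card_union_le U (extNbhdFinset G U)
  omega

/-- **Lemma (sufficient conditions for expansion).**
Let `m, d ≥ 1` and let `H` be a graph on `h ≥ 4m` vertices such that: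
(1) `δ(H) ≥ 2`; (2) no vertex of degree `< d` lies on a cycle of length 3 or 4, and
any two distinct vertices of degree `< d` are at distance at least 5;
(3) every `U` with `|U| ≤ 5m` spans at most `d|U|/10` edges; (4) there is an edge
between every two disjoint sets of `m` vertices each. Then `H` is an
`(h/4, 2)`-expander. -/
theorem expander_sufficient_conditions
    {V : Type*} [Fintype V] [DecidableEq V] (H : SimpleGraph V) [DecidableRel H.Adj]
    (h m d : ℕ) (hh : Fintype.card V = h) (hm : 1 ≤ m) (hd : 1 ≤ d) (h4m : 4 * m ≤ h)
    (h1 : ∀ v : V, 2 ≤ H.degree v)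
    (h2a : ∀ v : V, H.degree v < d →
      ¬∃ (u : V) (w : H.Walk u u), w.IsCycle ∧ (w.length = 3 ∨ w.length = 4) ∧
        v ∈ w.support)
    (h2b : ∀ u v : V, u ≠ v → H.degree u < d → H.degree v < d →
      ∀ w : H.Walk u v, 5 ≤ w.length)
    (h3 : ∀ U : Finset V, U.card ≤ 5 * m →
      (({e ∈ H.edgeSet | ∀ v ∈ e, v ∈ U}).ncard : ℝ) ≤ (d : ℝ) * U.card / 10)
    (h4 : ∀ U₁ U₂ : Finset V, Disjoint U₁ U₂ → U₁.card = m → U₂.card = m →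
      ∃ u ∈ U₁, ∃ v ∈ U₂, H.Adj u v) :
    IsExpander H ((h : ℝ) / 4) 2 := by
  have hscattered : IsScattered H {v | H.degree v < d} :=
    ⟨fun s hs t ht hst => h2b s t hst hs ht, fun s hs w hw => by
      by_contra! hlt
      have := hw.three_le_length
      exact h2a s hs ⟨s, w, hw, by omega, w.start_mem_support⟩⟩
  have hsparse : IsLocallySparse H (5 * m) d := fun W hW => by
    have := h3 W hW
    rify
    linarith
  intro U hU
  lift U to Finset V using U.toFinite
  rw [← coe_extNbhdFinset, Set.ncard_coe_finset, Set.ncard_coe_finset]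
  rw [Set.ncard_coe_finset, le_div_iff₀' four_pos] at hU
  norm_cast at hU ⊢
  rcases le_or_gt #U m with hUm | hmU
  · exact two_mul_card_le_card_extNbhdFinset_of_isScattered hd (fun v _ => h1 v) hscattered hsparse
      (by omega)
  · have := card_lt_card_add_card_extNbhdFinset_add h4 hmU.le
    omega
end
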